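/- There is a universal constant C > 0 with the following property. Let (X, H) be a hypothesis class with X countable and with Littlestone dimension d < ∞, and let 0 < ε < 1/2. Then every complete ε-good binary tree that is shattered by H has depth at most C·d/(1/2 − ε)^2; that is, d_ε ≤ C·d/(1/2 − ε)^2, where d_ε denotes the maximum possible depth of a complete ε-good tree shattered by H. -/

import Mathlib

open scoped Classical
universe u

/-- `h` realizes the branch `y` in the binary tree with node labels given by `t`
(the node reached by the bit string `s` is labeled `t s`). -/
def Realizes {X : Type*} (t : List Bool → X) (h : X → Bool) (y : List Bool) : Prop :=
  ∀ i : Fin y.length, h (t (y.take i)) = y.get i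

/-- `H` shatters some complete binary mistake tree of depth `d`. -/
def Shatters {X : Type*} (H : Set (X → Bool)) (d : ℕ) : Prop :=
  ∃ t : List Bool → X, ∀ y : List Bool, y.length = d → ∃ h ∈ H, Realizes t h y

/-- Littlestone dimension: supremum of depths of shattered mistake trees
(`⊥` for the empty class, `⊤` if unbounded). -/
noncomputable def Ldim {X : Type*} (H : Set (X → Bool)) : WithBot ℕ∞ :=
  sSup {d : WithBot ℕ∞ | ∃ n : ℕ, Shatters H n ∧ d = ((n : ℕ∞) : WithBot ℕ∞)}

/-- The mass that distribution `D` assigns to `{x : h x = 1}`. -/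
noncomputable def hmass {X : Type*} (D : X → ℝ) (h : X → Bool) : ℝ :=
  ∑' x, if h x = true then D x else 0

/-- `D` is a probability mass function on `X`. -/
def IsPMF {X : Type*} (D : X → ℝ) : Prop :=
  (∀ x, 0 ≤ D x) ∧ (∑' x, D x) = 1

/-- `D` is an ε-good probability mass function w.r.t. `H`. -/
def GoodPMF {X : Type*} (H : Set (X → Bool)) (ε : ℝ) (D : X → ℝ) : Prop :=
  IsPMF D ∧ ∀ h ∈ H, hmass D h ≤ ε ∨ 1 - ε ≤ hmass D h

/-- `h` realizes the branch `y` of the distribution-labeled tree `𝒯`: at each node it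
goes in direction 1 iff the node's distribution gives `{x : h x = 1}` mass `≥ 1 - ε`. -/
def RealizesDist {X : Type*} (ε : ℝ) (𝒯 : List Bool → X → ℝ) (h : X → Bool)
    (y : List Bool) : Prop :=
  ∀ i : Fin y.length,
    (y.get i = true → 1 - ε ≤ hmass (𝒯 (y.take i)) h) ∧
    (y.get i = false → hmass (𝒯 (y.take i)) h ≤ ε)

/-- `𝒯` is a complete ε-good binary tree of depth `T` shattered by `H`. -/
def GoodTree {X : Type*} (H : Set (X → Bool)) (ε : ℝ) (T : ℕ)
    (𝒯 : List Bool → X → ℝ) : Prop :=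
  (∀ s : List Bool, s.length < T → GoodPMF H ε (𝒯 s)) ∧
  (∀ y : List Bool, y.length = T → ∃ h ∈ H, RealizesDist ε 𝒯 h y)

/-! Let `γ = 1/2 - ε` and pick one hypothesis per branch. If `k ≈ 2/γ²` points are drawn from the
distribution at a node, the majority vote of a hypothesis on them is its direction there, except
with probability at most `1/4`. Hence `k` points can be fixed on which this holds for `3/4` of the
hypotheses reaching the node. Discard the others, group the survivors by their values on the `k`
points, and recurse: each group follows a single edge of the tree. In the end at least
`(3/4)^T * 2^T` branches survive, and they are told apart by an adaptive sequence of `k * T` point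
queries, so the Sauer–Shelah argument for Littlestone dimension bounds their number by
`∑ i ≤ d, (k * T).choose i`. Comparing the two gives `T = O(d * log (1/γ))`. -/

open Finset

variable {ι X : Type*}

section SauerSum

/-- The Sauer–Shelah bound on the number of outcomes of `m` adaptive point queries to a class that
shatters no tree of depth `d`. The index stays *below* `d`, so `d = 0`, i.e. an empty class,
gives `0`. -/
def sauerSum (d m : ℕ) : ℕ :=
  ∑ i ∈ range d, m.choose i

theorem sauerSum_succ_zero (d : ℕ) : sauerSum (d + 1) 0 = 1 := by
  simp [sauerSum, sum_range_succ']

theorem sauerSum_succ_succ (d m : ℕ) :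
    sauerSum (d + 1) (m + 1) = sauerSum (d + 1) m + sauerSum d m := by
  simp only [sauerSum, sum_range_succ' _ d, Nat.choose_succ_succ, sum_add_distrib,
    Nat.choose_zero_right]
  ring

theorem sauerSum_succ_le_pow_mul_pow {q : ℝ} (hq₀ : 0 < q) (hq₁ : q ≤ 1) (d m : ℕ) :
    (sauerSum (d + 1) m : ℝ) ≤ (1 + q) ^ m * q⁻¹ ^ d := by
  have hterm : ∀ i ∈ range (d + 1), (m.choose i : ℝ) * q ^ d ≤ q ^ i * m.choose i := by
    intro i hi
    rw [mul_comm]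
    exact mul_le_mul_of_nonneg_right
      (pow_le_pow_of_le_one hq₀.le hq₁ (Nat.lt_succ_iff.mp (mem_range.mp hi))) (Nat.cast_nonneg _)
  have hbinom : ∑ i ∈ range (d + 1), q ^ i * (m.choose i : ℝ) ≤ (1 + q) ^ m := by
    calc ∑ i ∈ range (d + 1), q ^ i * (m.choose i : ℝ)
        ≤ ∑ i ∈ range (d + 1 + m), q ^ i * (m.choose i : ℝ) :=
          sum_le_sum_of_subset_of_nonneg (range_subset_range.mpr (by lia))
            fun _ _ _ ↦ by positivity
      _ = ∑ i ∈ range (m + 1), q ^ i * (m.choose i : ℝ) := by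
          refine (sum_subset (range_subset_range.mpr (by lia)) fun i _ hi ↦ ?_).symm
          rw [Nat.choose_eq_zero_of_lt (by rw [mem_range] at hi; lia), Nat.cast_zero, mul_zero]
      _ = (1 + q) ^ m := by simp [add_comm 1 q, add_pow]
  rw [inv_pow, ← div_eq_mul_inv, le_div_iff₀ (by positivity), sauerSum, Nat.cast_sum, sum_mul]
  exact (sum_le_sum hterm).trans hbinom

theorem le_mul_log_of_pow_le_sauerSum {T d k : ℕ} (hk : 0 < k)
    (h : (3 / 2 : ℝ) ^ T ≤ sauerSum (d + 1) (k * T)) : (T : ℝ) ≤ 6 * d * Real.log (6 * k) := by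
  have hk₁ : (1 : ℝ) ≤ k := mod_cast hk
  set q : ℝ := (6 * k)⁻¹ with hq
  have hq_inv : q⁻¹ = 6 * k := inv_inv _
  have hq₀ : 0 < q := by positivity
  have hq₁ : q ≤ 1 := inv_le_one_of_one_le₀ (by linarith)
  have hlog := Real.log_le_log (by positivity) (h.trans (sauerSum_succ_le_pow_mul_pow hq₀ hq₁ d _))
  rw [Real.log_mul (by positivity) (by positivity), Real.log_pow, Real.log_pow, Real.log_pow,
    hq_inv] at hlog
  have hgrowth : (1 / 3 : ℝ) ≤ Real.log (3 / 2) := by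
    linarith [Real.one_sub_inv_le_log_of_pos (x := 3 / 2) (by norm_num)]
  have hcost : (↑(k * T) : ℝ) * Real.log (1 + q) ≤ T / 6 := by
    calc (↑(k * T) : ℝ) * Real.log (1 + q) ≤ ↑(k * T) * q := by
          gcongr
          linarith [Real.log_le_sub_one_of_pos (x := 1 + q) (by positivity)]
      _ = T / 6 := by
          rw [hq]
          push_cast
          field_simp
  have := mul_le_mul_of_nonneg_left hgrowth (Nat.cast_nonneg (α := ℝ) T)
  linarith

end SauerSum

section Littlestone

theorem realizes_cons {t : List Bool → X} {h : X → Bool} {b : Bool} {y : List Bool} :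
    Realizes t h (b :: y) ↔ h (t []) = b ∧ Realizes (fun s ↦ t (b :: s)) h y := by
  simp only [Realizes, List.length_cons, Fin.forall_fin_succ, Fin.val_zero, List.take_zero,
    Fin.val_succ, List.take_succ_cons, List.get_eq_getElem, List.getElem_cons_zero,
    List.getElem_cons_succ]

theorem Shatters.mono {V W : Set (X → Bool)} (hVW : V ⊆ W) {n : ℕ} (hV : Shatters V n) :
    Shatters W n := by
  obtain ⟨t, ht⟩ := hV
  exact ⟨t, fun y hy ↦ (ht y hy).imp fun _ ⟨hmem, hreal⟩ ↦ ⟨hVW hmem, hreal⟩⟩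

theorem shatters_zero [Nonempty X] {V : Set (X → Bool)} (hV : V.Nonempty) : Shatters V 0 := by
  obtain ⟨h, hh⟩ := hV
  refine ⟨fun _ ↦ Classical.arbitrary X, fun y hy ↦ ⟨h, hh, ?_⟩⟩
  rw [List.length_eq_zero_iff] at hy
  subst hy
  exact fun i ↦ i.elim0

theorem Shatters.succ {V : Set (X → Bool)} (x : X) {n : ℕ}
    (hV : ∀ b, Shatters {h ∈ V | h x = b} n) : Shatters V (n + 1) := by
  choose t ht using hV
  refine ⟨fun | [] => x | b :: s => t b s, ?_⟩
  rintro (_ | ⟨b, y⟩) hy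
  · simp at hy
  · obtain ⟨h, ⟨hmem, hb⟩, hreal⟩ := ht b y (by simpa using hy)
    exact ⟨h, hmem, realizes_cons.mpr ⟨hb, hreal⟩⟩

theorem Shatters.le_Ldim {V : Set (X → Bool)} {n : ℕ} (hV : Shatters V n) :
    ((n : ℕ∞) : WithBot ℕ∞) ≤ Ldim V :=
  le_sSup ⟨n, hV, rfl⟩

end Littlestone

section SauerBound

/-- The family `h` restricted to the index set `S` satisfies the Sauer–Shelah bound for `m` queries
up to the factor `c`. The bound is required for every `n` at which shattering fails, so that it can
be applied to both halves of a split without naming their Littlestone dimensions. -/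
def SauerBound (h : ι → X → Bool) (c : ℝ) (m : ℕ) (S : Finset ι) : Prop :=
  ∀ n, ¬ Shatters (h '' S) n → c * #S ≤ sauerSum n m

variable {h : ι → X → Bool} {c : ℝ} {m : ℕ} {S : Finset ι}

theorem sauerBound_empty : SauerBound h c m ∅ := fun n _ ↦ by simp

theorem eq_empty_of_not_shatters_zero [Nonempty X] (hS : ¬ Shatters (h '' S) 0) : S = ∅ := by
  contrapose! hS
  exact shatters_zero (by simpa using hS)

theorem sauerBound_of_card_le_one [Nonempty X] (hS : #S ≤ 1) : SauerBound h 1 0 S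
  | 0, hn => by simp [eq_empty_of_not_shatters_zero hn]
  | n + 1, _ => by simpa [sauerSum_succ_zero] using hS

theorem SauerBound.of_subset {S' : Finset ι} {a : ℝ} (hS' : SauerBound h c m S') (hsub : S' ⊆ S)
    (hc : 0 ≤ c) (hcard : a * #S ≤ #S') : SauerBound h (c * a) m S := by
  intro n hn
  calc c * a * #S = c * (a * #S) := mul_assoc _ _ _
    _ ≤ c * #S' := by gcongr
    _ ≤ sauerSum n m := hS' n fun hshat ↦ hn (hshat.mono (by gcongr))

theorem SauerBound.of_split [Nonempty X] (x : X)
    (hsplit : ∀ b, SauerBound h c m {i ∈ S | h i x = b}) : SauerBound h c (m + 1) S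
  | 0, hn => by simp [eq_empty_of_not_shatters_zero hn]
  | n + 1, hn => by
    have hhalf : ∀ b, h '' ↑({i ∈ S | h i x = b} : Finset ι) = {g ∈ h '' S | g x = b} := by
      intro b
      ext g
      simp only [coe_filter, Set.mem_image, Set.mem_ofPred_eq, mem_coe]
      grind
    obtain ⟨b, hb⟩ : ∃ b, ¬ Shatters {g ∈ h '' S | g x = b} n := by
      contrapose! hn
      exact .succ x hn
    have hb' : ¬ Shatters {g ∈ h '' S | g x = !b} (n + 1) := fun hshat ↦
      hn (hshat.mono (Set.sep_subset _ _))
    have hcard : #S = #{i ∈ S | h i x = !b} + #{i ∈ S | h i x = b} := by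
      rw [← card_filter_add_card_filter_not (fun i ↦ h i x = !b)]
      simp
    calc c * #S = c * #{i ∈ S | h i x = !b} + c * #{i ∈ S | h i x = b} := by
          rw [hcard]
          push_cast
          ring
      _ ≤ sauerSum (n + 1) m + sauerSum n m :=
          add_le_add (hsplit _ _ (hhalf _ ▸ hb')) (hsplit _ _ (hhalf _ ▸ hb))
      _ = sauerSum (n + 1) (m + 1) := by
          rw [sauerSum_succ_succ, Nat.cast_add]

theorem SauerBound.of_forall_constant_on_list [Nonempty X] (l : List X)
    (hconst : ∀ S' ⊆ S, (∀ i ∈ S', ∀ j ∈ S', ∀ x ∈ l, h i x = h j x) → SauerBound h c m S') :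
    SauerBound h c (m + l.length) S := by
  induction l generalizing S with
  | nil => exact hconst S subset_rfl (by simp)
  | cons x l ih =>
    refine .of_split x fun b ↦ ih fun S' hS' hl ↦ hconst S' (hS'.trans (filter_subset _ _)) ?_
    intro i hi j hj
    rw [List.forall_mem_cons]
    exact ⟨(mem_filter.mp (hS' hi)).2.trans (mem_filter.mp (hS' hj)).2.symm, hl i hi j hj⟩

end SauerBound

section PMF

variable {D : X → ℝ}

theorem IsPMF.hasSum (hD : IsPMF D) : HasSum D 1 := by
  have hsum : Summable D := by
    by_contra hns
    simpa [tsum_eq_zero_of_not_summable hns] using hD.2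
  exact hD.2 ▸ hsum.hasSum

theorem IsPMF.nonempty (hD : IsPMF D) : Nonempty X := by
  by_contra hX
  rw [not_nonempty_iff] at hX
  simpa using hD.2

theorem IsPMF.hasSum_hmass (hD : IsPMF D) (g : X → Bool) :
    HasSum (fun x ↦ if g x = true then D x else 0) (hmass D g) :=
  ((hD.hasSum.summable.indicator {x | g x = true}).congr fun x ↦ by
    simp only [Set.indicator_apply, Set.mem_ofPred_eq]).hasSum

theorem IsPMF.hasSum_mul_ite (hD : IsPMF D) (g : X → Bool) (u v : ℝ) :
    HasSum (fun x ↦ D x * if g x = true then u else v) (v + (u - v) * hmass D g) := by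
  have hsum := (hD.hasSum.mul_left v).add ((hD.hasSum_hmass g).mul_left (u - v))
  rw [mul_one] at hsum
  refine hsum.congr_fun fun x ↦ ?_
  split_ifs <;> ring

theorem IsPMF.hmass_not (hD : IsPMF D) (g : X → Bool) :
    hmass D (fun x ↦ !g x) = 1 - hmass D g := by
  refine HasSum.tsum_eq ?_
  refine (hD.hasSum.sub (hD.hasSum_hmass g)).congr_fun fun x ↦ ?_
  cases hx : g x <;> simp [hx]

theorem IsPMF.exists_le_of_hasSum (hD : IsPMF D) {f : X → ℝ} {a : ℝ}
    (hf : HasSum (fun x ↦ D x * f x) a) : ∃ x, f x ≤ a := by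
  by_contra! hlt
  have hzero : HasSum (fun x ↦ D x * (f x - a)) 0 := by
    simpa [mul_sub] using hf.sub (hD.hasSum.mul_right a)
  rw [hasSum_zero_iff_of_nonneg fun x ↦ mul_nonneg (hD.1 x) (sub_nonneg.mpr (hlt x).le)] at hzero
  have hD₀ : D = 0 := funext fun x ↦
    (mul_eq_zero.mp (congrFun hzero x)).resolve_right (sub_pos.mpr (hlt x)).ne'
  simpa [hD₀] using hD.2

end PMF

section Vote

/-- The number of points of `l` (with multiplicity) at which `g` is `true`, minus the number of
those at which it is `false`; its sign is the majority vote of `g` on `l`. -/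
def vote (g : X → Bool) (l : List X) : ℤ :=
  (l.map fun x ↦ if g x = true then 1 else -1).sum

theorem vote_cons (g : X → Bool) (x : X) (l : List X) :
    vote g (x :: l) = (if g x = true then 1 else -1) + vote g l := by
  simp [vote]

theorem vote_not (g : X → Bool) (l : List X) : vote (fun x ↦ !g x) l = -vote g l := by
  induction l with
  | nil => rfl
  | cons x l ih =>
    rw [vote_cons, vote_cons, ih]
    cases g x <;> simp <;> ring

theorem vote_congr {g g' : X → Bool} {l : List X} (hl : ∀ x ∈ l, g x = g' x) :
    vote g l = vote g' l := by
  rw [vote, vote, List.map_congr_left fun x hx ↦ by rw [hl x hx]]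

theorem eq_of_vote_beq_pos {g g' : X → Bool} {b b' : Bool} {l : List X}
    (hl : ∀ x ∈ l, g x = g' x) (hb : 0 < vote (fun x ↦ g x == b) l)
    (hb' : 0 < vote (fun x ↦ g' x == b') l) : b = b' := by
  have hvote := vote_congr hl
  cases b <;> cases b' <;>
    simp only [beq_true, beq_false, vote_not] at hb hb' ⊢ <;> lia

end Vote

section Sampling

variable {D : X → ℝ} {ε : ℝ} {S : Finset ι} {g : ι → X → Bool}

theorem IsPMF.exists_sum_mul_ite_le (hD : IsPMF D) (hg : ∀ i ∈ S, 1 - ε ≤ hmass D (g i)) {b : ℝ}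
    (hb : 1 ≤ b) {w : ι → ℝ} (hw : ∀ i ∈ S, 0 ≤ w i) :
    ∃ x, ∑ i ∈ S, w i * (if g i x = true then b⁻¹ else b) ≤
      (ε * b + (1 - ε) * b⁻¹) * ∑ i ∈ S, w i := by
  have hmean : HasSum (fun x ↦ D x * ∑ i ∈ S, w i * (if g i x = true then b⁻¹ else b))
      (∑ i ∈ S, w i * (b + (b⁻¹ - b) * hmass D (g i))) := by
    have hsum := hasSum_sum fun i (_ : i ∈ S) ↦ (hD.hasSum_mul_ite (g i) b⁻¹ b).mul_left (w i)
    simpa only [mul_left_comm (w _), ← mul_sum] using hsum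
  obtain ⟨x, hx⟩ := hD.exists_le_of_hasSum hmean
  refine ⟨x, hx.trans ?_⟩
  rw [mul_comm, sum_mul]
  refine sum_le_sum fun i hi ↦ mul_le_mul_of_nonneg_left ?_ (hw i hi)
  have hb_inv : b⁻¹ ≤ b := (inv_le_one_of_one_le₀ hb).trans hb
  linarith [mul_le_mul_of_nonpos_left (hg i hi) (sub_nonpos.mpr hb_inv)]

-- Greedy choice of the points keeps the exponential loss below its mean under i.i.d. sampling.
theorem IsPMF.exists_list_sum_zpow_neg_vote_le (hD : IsPMF D)
    (hg : ∀ i ∈ S, 1 - ε ≤ hmass D (g i)) {b : ℝ} (hb : 1 ≤ b)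
    (hrate : 0 ≤ ε * b + (1 - ε) * b⁻¹) (k : ℕ) :
    ∃ l : List X, l.length = k ∧
      ∑ i ∈ S, b ^ (-vote (g i) l) ≤ (ε * b + (1 - ε) * b⁻¹) ^ k * #S := by
  have hb₀ : 0 < b := by linarith
  induction k with
  | zero => exact ⟨[], rfl, by simp [vote]⟩
  | succ k ih =>
    obtain ⟨l, hl, hsum⟩ := ih
    obtain ⟨x, hx⟩ := hD.exists_sum_mul_ite_le hg hb
      (w := fun i ↦ b ^ (-vote (g i) l)) fun i _ ↦ by positivity
    have hcons : ∀ i, b ^ (-vote (g i) (x :: l)) =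
        b ^ (-vote (g i) l) * if g i x = true then b⁻¹ else b := by
      intro i
      rw [vote_cons, neg_add_rev, zpow_add₀ hb₀.ne']
      split_ifs <;> simp
    refine ⟨x :: l, by rw [List.length_cons, hl], ?_⟩
    simp only [hcons, pow_succ', mul_assoc]
    exact hx.trans (mul_le_mul_of_nonneg_left hsum hrate)

theorem mul_add_mul_inv_le_exp_neg_sq {γ : ℝ} (hγ : 0 < γ) (hεγ : ε + γ = 1 / 2) :
    ε * (1 + γ) + (1 - ε) * (1 + γ)⁻¹ ≤ Real.exp (-γ ^ 2) := by
  obtain rfl : ε = 1 / 2 - γ := by linarith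
  calc (1 / 2 - γ) * (1 + γ) + (1 - (1 / 2 - γ)) * (1 + γ)⁻¹
      = -γ ^ 2 + 1 - γ ^ 2 / (2 * (1 + γ)) := by
        field_simp
        ring
    _ ≤ -γ ^ 2 + 1 := sub_le_self _ (by positivity)
    _ ≤ Real.exp (-γ ^ 2) := Real.add_one_le_exp _

theorem IsPMF.exists_list_vote_pos (hD : IsPMF D) (hg : ∀ i ∈ S, 1 - ε ≤ hmass D (g i))
    (hε₀ : 0 ≤ ε) (hε : ε < 1 / 2) {k : ℕ} (hk : 2 / (1 / 2 - ε) ^ 2 ≤ k) :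
    ∃ l : List X, l.length = k ∧ 3 / 4 * (#S : ℝ) ≤ #{i ∈ S | 0 < vote (g i) l} := by
  set γ := 1 / 2 - ε with hγ
  have hγ₀ : 0 < γ := by linarith
  have hrate : 0 ≤ ε * (1 + γ) + (1 - ε) * (1 + γ)⁻¹ :=
    add_nonneg (by positivity) (mul_nonneg (by linarith) (by positivity))
  have hdecay : (ε * (1 + γ) + (1 - ε) * (1 + γ)⁻¹) ^ k ≤ 1 / 4 := by
    calc (ε * (1 + γ) + (1 - ε) * (1 + γ)⁻¹) ^ k ≤ Real.exp (-γ ^ 2) ^ k := by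
          gcongr
          exact mul_add_mul_inv_le_exp_neg_sq hγ₀ (by linarith)
      _ = Real.exp (-(k * γ ^ 2)) := by rw [← Real.exp_nat_mul, mul_neg]
      _ ≤ Real.exp (-1 + -1) := by
          rw [div_le_iff₀ (by positivity)] at hk
          gcongr
          linarith
      _ ≤ 1 / 2 * (1 / 2) := by
          rw [Real.exp_add]
          gcongr <;> linarith [Real.exp_neg_one_lt_half]
      _ = 1 / 4 := by norm_num
  obtain ⟨l, hl, hloss⟩ := hD.exists_list_sum_zpow_neg_vote_le hg (b := 1 + γ) (by linarith) hrate k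
  have hmarkov : (#{i ∈ S | ¬ 0 < vote (g i) l} : ℝ) ≤ ∑ i ∈ S, (1 + γ) ^ (-vote (g i) l) := by
    rw [card_filter, Nat.cast_sum]
    refine sum_le_sum fun i _ ↦ ?_
    split_ifs with hvote
    · rw [Nat.cast_zero]
      positivity
    · rw [Nat.cast_one]
      exact one_le_zpow₀ (by linarith) (by lia)
  have hcard : (#{i ∈ S | 0 < vote (g i) l} : ℝ) + #{i ∈ S | ¬ 0 < vote (g i) l} = #S :=
    mod_cast card_filter_add_card_filter_not _
  refine ⟨l, hl, ?_⟩
  linarith [mul_le_mul_of_nonneg_right hdecay (Nat.cast_nonneg (α := ℝ) #S)]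

end Sampling

section DistributionTree

variable {ε : ℝ} {𝒯 : List Bool → X → ℝ}

theorem RealizesDist.le_hmass_beq {h : X → Bool} {y : List Bool} (hy : RealizesDist ε 𝒯 h y)
    {i : ℕ} (hi : i < y.length) (hD : IsPMF (𝒯 (y.take i))) :
    1 - ε ≤ hmass (𝒯 (y.take i)) (fun x ↦ h x == y[i]) := by
  obtain ⟨htrue, hfalse⟩ := hy ⟨i, hi⟩
  simp only [List.get_eq_getElem] at htrue hfalse
  cases hbit : y[i] with
  | true => simpa using htrue hbit
  | false =>
    simp only [beq_false, hD.hmass_not]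
    exact sub_le_sub_left (hfalse hbit) 1

theorem exists_list_determining_next_bit {T : ℕ} {h : List.Vector Bool T → X → Bool}
    (hreal : ∀ y, RealizesDist ε 𝒯 (h y) y.toList) (hε₀ : 0 ≤ ε) (hε : ε < 1 / 2) {k : ℕ}
    (hk : 2 / (1 / 2 - ε) ^ 2 ≤ k) {s : List Bool} (hs : s.length < T) (hD : IsPMF (𝒯 s))
    {S : Finset (List.Vector Bool T)} (hS : ∀ y ∈ S, y.toList.take s.length = s) :
    ∃ l : List X, l.length = k ∧ ∃ S' ⊆ S, 3 / 4 * (#S : ℝ) ≤ #S' ∧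
      ∀ y ∈ S', ∀ z ∈ S', (∀ x ∈ l, h y x = h z x) → y.toList[s.length]? = z.toList[s.length]? := by
  have hlen : ∀ y : List.Vector Bool T, s.length < y.toList.length := by simpa using hs
  have hmass_ge : ∀ y ∈ S, 1 - ε ≤ hmass (𝒯 s) (fun x ↦ h y x == y.toList[s.length]'(hlen y)) := by
    intro y hy
    simpa only [hS y hy] using (hreal y).le_hmass_beq (hlen y) ((hS y hy).symm ▸ hD)
  obtain ⟨l, hl, hcard⟩ := hD.exists_list_vote_pos hmass_ge hε₀ hε hk
  refine ⟨l, hl, _, filter_subset _ _, hcard, fun y hy z hz hagree ↦ ?_⟩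
  rw [List.getElem?_eq_getElem (hlen y), List.getElem?_eq_getElem (hlen z), Option.some_inj]
  exact eq_of_vote_beq_pos hagree (mem_filter.mp hy).2 (mem_filter.mp hz).2

theorem sauerBound_of_common_prefix [Nonempty X] {T : ℕ} {h : List.Vector Bool T → X → Bool}
    (hpmf : ∀ s : List Bool, s.length < T → IsPMF (𝒯 s))
    (hreal : ∀ y, RealizesDist ε 𝒯 (h y) y.toList) (hε₀ : 0 ≤ ε) (hε : ε < 1 / 2) {k : ℕ}
    (hk : 2 / (1 / 2 - ε) ^ 2 ≤ k) (j : ℕ) (s : List Bool) (hs : s.length + j = T)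
    (S : Finset (List.Vector Bool T)) (hS : ∀ y ∈ S, y.toList.take s.length = s) :
    SauerBound h ((3 / 4) ^ j) (k * j) S := by
  induction j generalizing s S with
  | zero =>
    have hmem : ∀ y ∈ S, y.toList = s := fun y hy ↦ by
      rw [← hS y hy, List.take_of_length_le (by simp; lia)]
    rw [pow_zero, mul_zero]
    exact sauerBound_of_card_le_one <| card_le_one.mpr fun y hy z hz ↦
      List.Vector.eq y z ((hmem y hy).trans (hmem z hz).symm)
  | succ j ih =>
    obtain ⟨l, hl, S', hS'S, hcard, hbit⟩ :=
      exists_list_determining_next_bit hreal hε₀ hε hk (by lia) (hpmf s (by lia)) hS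
    have hgroups : SauerBound h ((3 / 4) ^ j) (k * j + k) S' := by
      rw [← hl]
      refine .of_forall_constant_on_list l fun S'' hS'' hagree ↦ ?_
      obtain rfl | ⟨y₀, hy₀⟩ := S''.eq_empty_or_nonempty
      · exact sauerBound_empty
      have hlen : (y₀.toList.take (s.length + 1)).length = s.length + 1 := by simp; lia
      rw [hl]
      refine ih (y₀.toList.take (s.length + 1)) (by lia) S'' fun y hy ↦ ?_
      rw [hlen, List.take_add_one, List.take_add_one, hS y (hS'S (hS'' hy)),
        hS y₀ (hS'S (hS'' hy₀)), hbit y (hS'' hy) y₀ (hS'' hy₀) (hagree y hy y₀ hy₀)]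
    rw [pow_succ, mul_add_one]
    exact hgroups.of_subset hS'S (by positivity) hcard

theorem depth_le_mul_log_of_sample_size {H : Set (X → Bool)} {d : ℕ}
    (hd : ¬ Shatters H (d + 1)) [Nonempty X] {T : ℕ}
    (hpmf : ∀ s : List Bool, s.length < T → IsPMF (𝒯 s))
    (hshat : ∀ y : List Bool, y.length = T → ∃ h ∈ H, RealizesDist ε 𝒯 h y)
    (hε₀ : 0 ≤ ε) (hε : ε < 1 / 2) {k : ℕ} (hk : 2 / (1 / 2 - ε) ^ 2 ≤ k) :
    (T : ℝ) ≤ 6 * d * Real.log (6 * k) := by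
  have hk₀ : 0 < k :=
    Nat.cast_pos.mp (hk.trans_lt' (div_pos two_pos (pow_pos (sub_pos.mpr hε) 2)))
  choose h hmem hreal using fun y : List.Vector Bool T ↦ hshat y.toList y.toList_length
  have hbound := sauerBound_of_common_prefix hpmf hreal hε₀ hε hk T [] (by simp) univ (by simp)
    (d + 1) fun hs ↦ hd (hs.mono (by simpa [Set.range_subset_iff] using hmem))
  refine le_mul_log_of_pow_le_sauerSum hk₀ ?_
  calc (3 / 2 : ℝ) ^ T = (3 / 4) ^ T * 2 ^ T := by rw [← mul_pow]; norm_num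
    _ ≤ sauerSum (d + 1) (k * T) := by simpa using hbound

end DistributionTree

theorem stmt_8_general {H : Set (X → Bool)} {d : ℕ} (hd : Ldim H ≤ ((d : ℕ∞) : WithBot ℕ∞))
    {ε : ℝ} (hε₀ : 0 ≤ ε) (hε : ε < 1 / 2) {T : ℕ} {𝒯 : List Bool → X → ℝ}
    (hpmf : ∀ s : List Bool, s.length < T → IsPMF (𝒯 s))
    (hshat : ∀ y : List Bool, y.length = T → ∃ h ∈ H, RealizesDist ε 𝒯 h y) :
    (T : ℝ) ≤ 6 * d * Real.log (18 / (1 / 2 - ε) ^ 2) := by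
  have hγ : 0 < (1 / 2 - ε) ^ 2 := pow_pos (sub_pos.mpr hε) 2
  have hγ_inv : 1 ≤ 1 / (1 / 2 - ε) ^ 2 := (one_le_div hγ).mpr (by nlinarith)
  obtain rfl | hT := T.eq_zero_or_pos
  · have : 0 ≤ Real.log (18 / (1 / 2 - ε) ^ 2) :=
      Real.log_nonneg (by linarith [div_eq_mul_one_div 18 ((1 / 2 - ε) ^ 2)])
    rw [Nat.cast_zero]
    positivity
  have : Nonempty X := (hpmf [] hT).nonempty
  have hH : ¬ Shatters H (d + 1) := fun hs ↦ by
    have := hs.le_Ldim.trans hd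
    rw [WithBot.coe_le_coe, Nat.cast_le] at this
    lia
  set k := ⌈2 / (1 / 2 - ε) ^ 2⌉₊
  have hk_le : 6 * (k : ℝ) ≤ 18 / (1 / 2 - ε) ^ 2 := by
    have := (Nat.ceil_lt_add_one (a := 2 / (1 / 2 - ε) ^ 2) (by positivity)).le
    calc 6 * (k : ℝ) ≤ 6 * (2 / (1 / 2 - ε) ^ 2 + 1 / (1 / 2 - ε) ^ 2) := by linarith
      _ = 18 / (1 / 2 - ε) ^ 2 := by ring
  have : 0 < k := Nat.ceil_pos.mpr (by positivity)
  calc (T : ℝ) ≤ 6 * d * Real.log (6 * k) :=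
        depth_le_mul_log_of_sample_size hH hpmf hshat hε₀ hε (Nat.le_ceil _)
    _ ≤ 6 * d * Real.log (18 / (1 / 2 - ε) ^ 2) := by gcongr

/-- there is a universal constant `C > 0` such that for every countable
hypothesis class with `Ldim(H) = d < ∞` and every `0 < ε < 1/2`, every complete ε-good
binary tree shattered by `H` has depth at most `C·d/(1/2 - ε)^2`. -/
theorem stmt_8 :
    ∃ C : ℝ, 0 < C ∧
      ∀ (X : Type u) [Countable X] (H : Set (X → Bool)) (d : ℕ),
        Ldim H = ((d : ℕ∞) : WithBot ℕ∞) →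
        ∀ ε : ℝ, 0 < ε → ε < 1/2 →
          ∀ (T : ℕ) (𝒯 : List Bool → X → ℝ), GoodTree H ε T 𝒯 →
            (T : ℝ) ≤ C * d / (1/2 - ε) ^ 2 := by
  refine ⟨108, by norm_num, fun X _ H d hd ε hε₀ hε T 𝒯 h𝒯 ↦ ?_⟩
  calc (T : ℝ) ≤ 6 * d * Real.log (18 / (1 / 2 - ε) ^ 2) :=
        stmt_8_general hd.le hε₀.le hε (fun s hs ↦ (h𝒯.1 s hs).1) h𝒯.2
    _ ≤ 6 * d * (18 / (1 / 2 - ε) ^ 2) := by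
        gcongr
        exact Real.log_le_self (by positivity)
    _ = 108 * d / (1 / 2 - ε) ^ 2 := by ring
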